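/- arXiv:1509.08526 — 4 statements merged into one kernel-verified Lean document; each statement's English description precedes it below -/
import Mathlib

section
/- Let g > 0, let ζ: ℝ² × ℝ → ℝ be C², and let (x(t), y(t)) be a C² curve. Define λ(t) = (ζ_xt ẋ + ζ_yt ẏ + ζ_xx ẋ² + 2ζ_xy ẋẏ + ζ_yy ẏ² + ζ_tt + g)/(1 + ζ_x² + ζ_y²), with all partial derivatives of ζ evaluated at (x(t), y(t), t). Then (x(t), y(t)) satisfies the constrained Euler–Lagrange equations ẍ + λ ζ_x = 0 and ÿ + λ ζ_y = 0 if and only if it satisfies the John–Sclavounos equations. -/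
/-!
Along the surface, `z(t) = ζ(x(t), y(t), t)` satisfies `z̈ + g = ∇ζ · a + Q`, where `a = (ẍ, ÿ)` and
`∇ζ = (ζ_x, ζ_y)`, and the John–Sclavounos equations read `a + (∇ζ · a + Q) ∇ζ = 0`. With
`λ = Q / (1 + |∇ζ|²)` this is the image of the Euler–Lagrange residual `a + λ ∇ζ` under the
dilatransvection `u ↦ u + (∇ζ · u) ∇ζ`, which is invertible because `1 + |∇ζ|² ≠ 0`.
-/

noncomputable section

/-- Partial derivative of `ζ(x,y,t)` with respect to `x`. -/
def dX (ζ : ℝ × ℝ × ℝ → ℝ) (p : ℝ × ℝ × ℝ) : ℝ := fderiv ℝ ζ p (1, 0, 0)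

/-- Partial derivative of `ζ(x,y,t)` with respect to `y`. -/
def dY (ζ : ℝ × ℝ × ℝ → ℝ) (p : ℝ × ℝ × ℝ) : ℝ := fderiv ℝ ζ p (0, 1, 0)

/-- Partial derivative of `ζ(x,y,t)` with respect to `t`. -/
def dT (ζ : ℝ × ℝ × ℝ → ℝ) (p : ℝ × ℝ × ℝ) : ℝ := fderiv ℝ ζ p (0, 0, 1)

def dXX (ζ : ℝ × ℝ × ℝ → ℝ) (p : ℝ × ℝ × ℝ) : ℝ := fderiv ℝ (dX ζ) p (1, 0, 0)
def dXY (ζ : ℝ × ℝ × ℝ → ℝ) (p : ℝ × ℝ × ℝ) : ℝ := fderiv ℝ (dX ζ) p (0, 1, 0)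
def dXT (ζ : ℝ × ℝ × ℝ → ℝ) (p : ℝ × ℝ × ℝ) : ℝ := fderiv ℝ (dX ζ) p (0, 0, 1)
def dYY (ζ : ℝ × ℝ × ℝ → ℝ) (p : ℝ × ℝ × ℝ) : ℝ := fderiv ℝ (dY ζ) p (0, 1, 0)
def dYT (ζ : ℝ × ℝ × ℝ → ℝ) (p : ℝ × ℝ × ℝ) : ℝ := fderiv ℝ (dY ζ) p (0, 0, 1)
def dTT (ζ : ℝ × ℝ × ℝ → ℝ) (p : ℝ × ℝ × ℝ) : ℝ := fderiv ℝ (dT ζ) p (0, 0, 1)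

/-- The John–Sclavounos equations for a horizontal trajectory `(x(t), y(t))` on the
unsteady surface `z = ζ(x,y,t)`, at time `t`, with gravitational acceleration `g`. -/
def JSEq (g : ℝ) (ζ : ℝ × ℝ × ℝ → ℝ) (x y : ℝ → ℝ) (t : ℝ) : Prop :=
  (1 + dX ζ (x t, y t, t) ^ 2) * deriv (deriv x) t
      + dX ζ (x t, y t, t) * dY ζ (x t, y t, t) * deriv (deriv y) t
      + (dTT ζ (x t, y t, t) + dXT ζ (x t, y t, t) * deriv x t
          + dYT ζ (x t, y t, t) * deriv y t + dXX ζ (x t, y t, t) * (deriv x t) ^ 2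
          + 2 * dXY ζ (x t, y t, t) * deriv x t * deriv y t
          + dYY ζ (x t, y t, t) * (deriv y t) ^ 2 + g) * dX ζ (x t, y t, t) = 0
  ∧ (1 + dY ζ (x t, y t, t) ^ 2) * deriv (deriv y) t
      + dX ζ (x t, y t, t) * dY ζ (x t, y t, t) * deriv (deriv x) t
      + (dTT ζ (x t, y t, t) + dXT ζ (x t, y t, t) * deriv x t
          + dYT ζ (x t, y t, t) * deriv y t + dXX ζ (x t, y t, t) * (deriv x t) ^ 2
          + 2 * dXY ζ (x t, y t, t) * deriv x t * deriv y t
          + dYY ζ (x t, y t, t) * (deriv y t) ^ 2 + g) * dY ζ (x t, y t, t) = 0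

open Module Matrix

theorem add_smul_eq_zero_iff_dilatransvection {R V : Type*} [Ring R] [AddCommGroup V] [Module R V]
    {f : Dual R V} {v : V} (hfv : IsUnit (1 + f v)) (a : V) (c : R) :
    a + c • v = 0 ↔ a + (f a + c * (1 + f v)) • v = 0 := by
  have map_residual : LinearEquiv.dilatransvection hfv (a + c • v) =
      a + (f a + c * (1 + f v)) • v := by
    rw [LinearEquiv.dilatransvection.apply, map_add, map_smul, smul_eq_mul, mul_add, mul_one]
    simp only [add_smul]
    abel
  rw [← map_residual, LinearEquiv.map_eq_zero_iff]

theorem add_smul_eq_zero_iff_add_dotProduct_smul {ι K : Type*} [Fintype ι] [Field K]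
    [LinearOrder K] [IsStrictOrderedRing K] (n a : ι → K) (c : K) :
    a + c • n = 0 ↔ a + (n ⬝ᵥ a + c * (1 + n ⬝ᵥ n)) • n = 0 := by
  have one_add_pos : 0 < 1 + n ⬝ᵥ n :=
    add_pos_of_pos_of_nonneg one_pos (Finset.sum_nonneg fun i _ ↦ mul_self_nonneg (n i))
  exact add_smul_eq_zero_iff_dilatransvection (f := dotProductBilin K K n)
    one_add_pos.ne'.isUnit a c

/-- The horizontal gradient `∇ζ = (ζ_x, ζ_y)` of the surface elevation. -/
def horizontalGradient (ζ : ℝ × ℝ × ℝ → ℝ) (p : ℝ × ℝ × ℝ) : Fin 2 → ℝ :=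
  ![dX ζ p, dY ζ p]

/-- The horizontal acceleration `a = (ẍ, ÿ)` of a trajectory. -/
def horizontalAcceleration (x y : ℝ → ℝ) (t : ℝ) : Fin 2 → ℝ :=
  ![deriv (deriv x) t, deriv (deriv y) t]

/-- The quantity `Q` of the John–Sclavounos equations: the part of `z̈ + g`, for
`z(t) = ζ(x(t), y(t), t)`, that does not involve the horizontal acceleration. -/
def surfaceForcing (g : ℝ) (ζ : ℝ × ℝ × ℝ → ℝ) (x y : ℝ → ℝ) (t : ℝ) : ℝ :=
  dTT ζ (x t, y t, t) + dXT ζ (x t, y t, t) * deriv x t + dYT ζ (x t, y t, t) * deriv y t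
    + dXX ζ (x t, y t, t) * deriv x t ^ 2
    + 2 * dXY ζ (x t, y t, t) * deriv x t * deriv y t
    + dYY ζ (x t, y t, t) * deriv y t ^ 2 + g

theorem one_add_horizontalGradient_dotProduct_self (ζ : ℝ × ℝ × ℝ → ℝ) (p : ℝ × ℝ × ℝ) :
    1 + horizontalGradient ζ p ⬝ᵥ horizontalGradient ζ p = 1 + dX ζ p ^ 2 + dY ζ p ^ 2 := by
  rw [horizontalGradient, vec2_dotProduct']
  ring

theorem horizontalAcceleration_add_smul_eq_zero_iff (ζ : ℝ × ℝ × ℝ → ℝ) (x y : ℝ → ℝ)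
    (t c : ℝ) (p : ℝ × ℝ × ℝ) :
    horizontalAcceleration x y t + c • horizontalGradient ζ p = 0 ↔
      deriv (deriv x) t + c * dX ζ p = 0 ∧ deriv (deriv y) t + c * dY ζ p = 0 := by
  simp [horizontalAcceleration, horizontalGradient]

theorem jsEq_iff_horizontalAcceleration_add_smul_eq_zero (g : ℝ) (ζ : ℝ × ℝ × ℝ → ℝ)
    (x y : ℝ → ℝ) (t : ℝ) :
    JSEq g ζ x y t ↔
      horizontalAcceleration x y t +
        (horizontalGradient ζ (x t, y t, t) ⬝ᵥ horizontalAcceleration x y t +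
          surfaceForcing g ζ x y t) • horizontalGradient ζ (x t, y t, t) = 0 := by
  rw [horizontalAcceleration_add_smul_eq_zero_iff, horizontalGradient, horizontalAcceleration,
    vec2_dotProduct', surfaceForcing, JSEq]
  ring_nf

/-- With the Lagrange multiplier
`λ = (ζ_xt ẋ + ζ_yt ẏ + ζ_xx ẋ² + 2ζ_xy ẋẏ + ζ_yy ẏ² + ζ_tt + g)/(1 + ζ_x² + ζ_y²)`,
the trajectory satisfies the constrained Euler–Lagrange equations
`ẍ + λ ζ_x = 0`, `ÿ + λ ζ_y = 0` if and only if it satisfies the John–Sclavounos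
equations. -/
theorem eulerLagrange_iff_JS
    (g : ℝ) (hg : 0 < g) (ζ : ℝ × ℝ × ℝ → ℝ) (hζ : ContDiff ℝ 2 ζ)
    (x y : ℝ → ℝ) (hx : ContDiff ℝ 2 x) (hy : ContDiff ℝ 2 y)
    (lam : ℝ → ℝ)
    (hlam : ∀ t, lam t =
      (dXT ζ (x t, y t, t) * deriv x t + dYT ζ (x t, y t, t) * deriv y t
        + dXX ζ (x t, y t, t) * (deriv x t) ^ 2
        + 2 * dXY ζ (x t, y t, t) * deriv x t * deriv y t
        + dYY ζ (x t, y t, t) * (deriv y t) ^ 2 + dTT ζ (x t, y t, t) + g)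
        / (1 + dX ζ (x t, y t, t) ^ 2 + dY ζ (x t, y t, t) ^ 2)) :
    (∀ t, deriv (deriv x) t + lam t * dX ζ (x t, y t, t) = 0 ∧
          deriv (deriv y) t + lam t * dY ζ (x t, y t, t) = 0)
    ↔ (∀ t, JSEq g ζ x y t) := by
  refine forall_congr' fun t ↦ ?_
  let n := horizontalGradient ζ (x t, y t, t)
  have lam_mul : lam t * (1 + n ⬝ᵥ n) = surfaceForcing g ζ x y t := by
    have denom_ne_zero : 1 + dX ζ (x t, y t, t) ^ 2 + dY ζ (x t, y t, t) ^ 2 ≠ 0 := by positivity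
    rw [one_add_horizontalGradient_dotProduct_self, hlam, div_mul_cancel₀ _ denom_ne_zero,
      surfaceForcing]
    ring
  rw [← horizontalAcceleration_add_smul_eq_zero_iff, add_smul_eq_zero_iff_add_dotProduct_smul,
    lam_mul, jsEq_iff_horizontalAcceleration_add_smul_eq_zero]

end
end

section
/- Let g > 0 and let ζ: ℝ² → ℝ be a C² time-independent surface elevation. If (x(t), y(t)) is a C² solution of the steady John–Sclavounos equations on an interval J, then the Hamiltonian H(t) = g ζ(x(t),y(t)) + ½(ẋ(t)² + ẏ(t)²) + ½(ẋ(t) ζ_x(x(t),y(t)) + ẏ(t) ζ_y(x(t),y(t)))² is constant on J. -/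
noncomputable section

/-- Partial derivative of `ζ(x,y)` with respect to `x`. -/
def dx (ζ : ℝ × ℝ → ℝ) (p : ℝ × ℝ) : ℝ := fderiv ℝ ζ p (1, 0)

/-- Partial derivative of `ζ(x,y)` with respect to `y`. -/
def dy (ζ : ℝ × ℝ → ℝ) (p : ℝ × ℝ) : ℝ := fderiv ℝ ζ p (0, 1)

def dxx (ζ : ℝ × ℝ → ℝ) (p : ℝ × ℝ) : ℝ := fderiv ℝ (dx ζ) p (1, 0)
def dxy (ζ : ℝ × ℝ → ℝ) (p : ℝ × ℝ) : ℝ := fderiv ℝ (dx ζ) p (0, 1)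
def dyy (ζ : ℝ × ℝ → ℝ) (p : ℝ × ℝ) : ℝ := fderiv ℝ (dy ζ) p (0, 1)

/-- The steady John–Sclavounos equations for a horizontal trajectory `(x(t), y(t))` on
the time-independent surface `z = ζ(x,y)`, at time `t`, with gravity `g`:
`(1+ζ_x²)ẍ + ζ_xζ_y ÿ + Q ζ_x = 0` and `(1+ζ_y²)ÿ + ζ_xζ_y ẍ + Q ζ_y = 0`, where
`Q = ζ_xx ẋ² + 2ζ_xy ẋẏ + ζ_yy ẏ² + g`. -/
def SteadyJSEq (g : ℝ) (ζ : ℝ × ℝ → ℝ) (x y : ℝ → ℝ) (t : ℝ) : Prop :=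
  (1 + dx ζ (x t, y t) ^ 2) * deriv (deriv x) t
      + dx ζ (x t, y t) * dy ζ (x t, y t) * deriv (deriv y) t
      + (dxx ζ (x t, y t) * (deriv x t) ^ 2
          + 2 * dxy ζ (x t, y t) * deriv x t * deriv y t
          + dyy ζ (x t, y t) * (deriv y t) ^ 2 + g) * dx ζ (x t, y t) = 0
  ∧ (1 + dy ζ (x t, y t) ^ 2) * deriv (deriv y) t
      + dx ζ (x t, y t) * dy ζ (x t, y t) * deriv (deriv x) t
      + (dxx ζ (x t, y t) * (deriv x t) ^ 2
          + 2 * dxy ζ (x t, y t) * deriv x t * deriv y t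
          + dyy ζ (x t, y t) * (deriv y t) ^ 2 + g) * dy ζ (x t, y t) = 0

/-!
The equations describe a bead of unit mass sliding without friction on the graph `z = ζ(x, y)`.
Writing `w = ẋ ζ_x + ẏ ζ_y` for the vertical velocity, the chain rule gives
`ẇ = ẍ ζ_x + ÿ ζ_y + (ζ_xx ẋ² + 2ζ_xy ẋẏ + ζ_yy ẏ²)`, so the steady equations read
`(ẍ, ÿ) = -(ẇ + g) (ζ_x, ζ_y)`: the reaction of the surface is normal to it and does no work.
Pairing with the horizontal velocity turns this into `ẋẍ + ẏÿ + w (ẇ + g) = 0`, whose left-hand side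
is the derivative of the Hamiltonian.
-/

section Calculus

variable {𝕜 E F : Type*} [NormedAddCommGroup E] [NormedAddCommGroup F]

theorem eq_of_forall_hasDerivWithinAt_zero [RCLike 𝕜] [NormedSpace 𝕜 E] {f : 𝕜 → E} {J : Set 𝕜}
    (hJ : Convex ℝ J) (hf : ∀ t ∈ J, HasDerivWithinAt f 0 J t) {s t : 𝕜} (hs : s ∈ J)
    (ht : t ∈ J) : f s = f t := by
  have h := hJ.norm_image_sub_le_of_norm_hasDerivWithin_le (C := 0) hf (by simp) ht hs
  rwa [zero_mul, norm_le_zero_iff, sub_eq_zero] at h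

theorem fderiv_fderiv_apply [NontriviallyNormedField 𝕜] [NormedSpace 𝕜 E] [NormedSpace 𝕜 F]
    {f : E → F} {p : E} (hf : DifferentiableAt 𝕜 (fderiv 𝕜 f) p) (v w : E) :
    fderiv 𝕜 (fun q => fderiv 𝕜 f q v) p w = fderiv 𝕜 (fderiv 𝕜 f) p w v := by
  simp [fderiv_clm_apply hf (differentiableAt_const v)]

theorem differentiableAt_fderiv_of_contDiffAt_two [NontriviallyNormedField 𝕜] [NormedSpace 𝕜 E]
    [NormedSpace 𝕜 F] {f : E → F} {p : E} (hf : ContDiffAt 𝕜 2 f p) :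
    DifferentiableAt 𝕜 (fderiv 𝕜 f) p :=
  (hf.fderiv_right one_add_one_eq_two.le).differentiableAt one_ne_zero

theorem fderiv_fderiv_apply_comm [NormedSpace ℝ E] [NormedSpace ℝ F] {f : E → F} {p : E}
    (hf : ContDiffAt ℝ 2 f p) (v w : E) :
    fderiv ℝ (fun q => fderiv ℝ f q v) p w = fderiv ℝ (fun q => fderiv ℝ f q w) p v := by
  have hf' := differentiableAt_fderiv_of_contDiffAt_two hf
  rw [fderiv_fderiv_apply hf', fderiv_fderiv_apply hf', hf.isSymmSndFDerivAt (by simp) w v]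

theorem hasDerivAt_of_contDiffAt_two [NontriviallyNormedField 𝕜] [NormedSpace 𝕜 F] {f : 𝕜 → F}
    {t : 𝕜} (hf : ContDiffAt 𝕜 2 f t) : HasDerivAt f (deriv f t) t :=
  (hf.differentiableAt two_ne_zero).hasDerivAt

theorem hasDerivAt_deriv_of_contDiffAt_two [NontriviallyNormedField 𝕜] [NormedSpace 𝕜 F]
    {f : 𝕜 → F} {t : 𝕜} (hf : ContDiffAt 𝕜 2 f t) :
    HasDerivAt (deriv f) (deriv (deriv f) t) t :=
  ((hf.derivWithin one_add_one_eq_two.le).differentiableAt one_ne_zero).hasDerivAt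

end Calculus

section PartialDerivatives

variable {f : ℝ × ℝ → ℝ} {p : ℝ × ℝ}

theorem fderiv_apply_eq_dx_add_dy (u v : ℝ) : fderiv ℝ f p (u, v) = u * dx f p + v * dy f p := by
  have huv : ((u, v) : ℝ × ℝ) = u • (1, 0) + v • (0, 1) := by simp
  rw [huv, map_add, map_smul, map_smul, smul_eq_mul, smul_eq_mul, dx, dy]

theorem differentiableAt_dx (hf : DifferentiableAt ℝ (fderiv ℝ f) p) :
    DifferentiableAt ℝ (dx f) p :=
  hf.clm_apply (differentiableAt_const _)

theorem differentiableAt_dy (hf : DifferentiableAt ℝ (fderiv ℝ f) p) :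
    DifferentiableAt ℝ (dy f) p :=
  hf.clm_apply (differentiableAt_const _)

theorem dx_dy_eq_dxy (hf : ContDiffAt ℝ 2 f p) : dx (dy f) p = dxy f p :=
  fderiv_fderiv_apply_comm hf (0, 1) (1, 0)

theorem hasDerivAt_comp_curve {x y : ℝ → ℝ} {u v t : ℝ} (hf : DifferentiableAt ℝ f (x t, y t))
    (hx : HasDerivAt x u t) (hy : HasDerivAt y v t) :
    HasDerivAt (fun s => f (x s, y s)) (u * dx f (x t, y t) + v * dy f (x t, y t)) t := by
  rw [← fderiv_apply_eq_dx_add_dy]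
  exact hf.hasFDerivAt.comp_hasDerivAt t (hx.prodMk hy)

end PartialDerivatives

/-- The velocity `ẋ ζ_x + ẏ ζ_y` of the height `ζ(x(t), y(t))`. -/
def verticalVelocity (ζ : ℝ × ℝ → ℝ) (x y : ℝ → ℝ) (t : ℝ) : ℝ :=
  deriv x t * dx ζ (x t, y t) + deriv y t * dy ζ (x t, y t)

/-- The acceleration of the height `ζ(x(t), y(t))`, in the expanded form given by the chain rule
and the symmetry of second derivatives, so that the quadratic part of the coefficient `Q` of the
steady equations is visible. -/
def verticalAcceleration (ζ : ℝ × ℝ → ℝ) (x y : ℝ → ℝ) (t : ℝ) : ℝ :=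
  deriv (deriv x) t * dx ζ (x t, y t) + deriv (deriv y) t * dy ζ (x t, y t)
    + (dxx ζ (x t, y t) * deriv x t ^ 2 + 2 * dxy ζ (x t, y t) * deriv x t * deriv y t
      + dyy ζ (x t, y t) * deriv y t ^ 2)

/-- The Hamiltonian `g ζ + ½(ẋ² + ẏ²) + ½(ẋ ζ_x + ẏ ζ_y)²` along the trajectory: the energy per
unit mass of a particle confined to the surface `z = ζ(x, y)`. -/
def hamiltonian (g : ℝ) (ζ : ℝ × ℝ → ℝ) (x y : ℝ → ℝ) (t : ℝ) : ℝ :=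
  g * ζ (x t, y t) + (1 / 2) * (deriv x t ^ 2 + deriv y t ^ 2)
    + (1 / 2) * verticalVelocity ζ x y t ^ 2

section Trajectory

variable {g t : ℝ} {ζ : ℝ × ℝ → ℝ} {x y : ℝ → ℝ}

theorem hasDerivAt_verticalVelocity (hζ : ContDiffAt ℝ 2 ζ (x t, y t)) (hx : ContDiffAt ℝ 2 x t)
    (hy : ContDiffAt ℝ 2 y t) :
    HasDerivAt (verticalVelocity ζ x y) (verticalAcceleration ζ x y t) t := by
  have hx' := hasDerivAt_of_contDiffAt_two hx
  have hy' := hasDerivAt_of_contDiffAt_two hy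
  have hζ' := differentiableAt_fderiv_of_contDiffAt_two hζ
  have hζx : HasDerivAt (fun s => dx ζ (x s, y s))
      (deriv x t * dxx ζ (x t, y t) + deriv y t * dxy ζ (x t, y t)) t :=
    hasDerivAt_comp_curve (differentiableAt_dx hζ') hx' hy'
  have hζy : HasDerivAt (fun s => dy ζ (x s, y s))
      (deriv x t * dxy ζ (x t, y t) + deriv y t * dyy ζ (x t, y t)) t := by
    rw [← dx_dy_eq_dxy hζ]
    exact hasDerivAt_comp_curve (differentiableAt_dy hζ') hx' hy'
  refine (((hasDerivAt_deriv_of_contDiffAt_two hx).mul hζx).add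
    ((hasDerivAt_deriv_of_contDiffAt_two hy).mul hζy)).congr_deriv ?_
  rw [verticalAcceleration]
  ring

theorem hasDerivAt_hamiltonian (hζ : ContDiffAt ℝ 2 ζ (x t, y t)) (hx : ContDiffAt ℝ 2 x t)
    (hy : ContDiffAt ℝ 2 y t) :
    HasDerivAt (hamiltonian g ζ x y)
      (deriv x t * deriv (deriv x) t + deriv y t * deriv (deriv y) t
        + verticalVelocity ζ x y t * (verticalAcceleration ζ x y t + g)) t := by
  have hz : HasDerivAt (fun s => ζ (x s, y s)) (verticalVelocity ζ x y t) t :=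
    hasDerivAt_comp_curve (hζ.differentiableAt two_ne_zero)
      (hasDerivAt_of_contDiffAt_two hx) (hasDerivAt_of_contDiffAt_two hy)
  have hu := hasDerivAt_deriv_of_contDiffAt_two hx
  have hv := hasDerivAt_deriv_of_contDiffAt_two hy
  have hw := hasDerivAt_verticalVelocity hζ hx hy
  refine (((hz.const_mul g).add (((hu.pow 2).add (hv.pow 2)).const_mul (1 / 2))).add
    ((hw.pow 2).const_mul (1 / 2))).congr_deriv ?_
  ring

theorem steadyJSEq_iff_acceleration_add_mul_gradient_eq_zero :
    SteadyJSEq g ζ x y t ↔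
      deriv (deriv x) t + (verticalAcceleration ζ x y t + g) * dx ζ (x t, y t) = 0 ∧
      deriv (deriv y) t + (verticalAcceleration ζ x y t + g) * dy ζ (x t, y t) = 0 := by
  rw [SteadyJSEq, verticalAcceleration]
  refine and_congr (Eq.congr_left ?_) (Eq.congr_left ?_) <;> ring

theorem SteadyJSEq.power_eq_zero (h : SteadyJSEq g ζ x y t) :
    deriv x t * deriv (deriv x) t + deriv y t * deriv (deriv y) t
      + verticalVelocity ζ x y t * (verticalAcceleration ζ x y t + g) = 0 := by
  obtain ⟨hx, hy⟩ := steadyJSEq_iff_acceleration_add_mul_gradient_eq_zero.mp h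
  rw [verticalVelocity]
  linear_combination deriv x t * hx + deriv y t * hy

theorem SteadyJSEq.hasDerivAt_hamiltonian_zero (h : SteadyJSEq g ζ x y t)
    (hζ : ContDiffAt ℝ 2 ζ (x t, y t)) (hx : ContDiffAt ℝ 2 x t) (hy : ContDiffAt ℝ 2 y t) :
    HasDerivAt (hamiltonian g ζ x y) 0 t :=
  (hasDerivAt_hamiltonian hζ hx hy).congr_deriv h.power_eq_zero

end Trajectory

theorem steadyJS_hamiltonian_conserved_general {g : ℝ} {ζ : ℝ × ℝ → ℝ} {x y : ℝ → ℝ} {J : Set ℝ}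
    (hJ : J.OrdConnected) (hζ : ∀ t ∈ J, ContDiffAt ℝ 2 ζ (x t, y t))
    (hx : ∀ t ∈ J, ContDiffAt ℝ 2 x t) (hy : ∀ t ∈ J, ContDiffAt ℝ 2 y t)
    (hJS : ∀ t ∈ J, SteadyJSEq g ζ x y t) :
    ∀ s ∈ J, ∀ t ∈ J, hamiltonian g ζ x y s = hamiltonian g ζ x y t := by
  have hderiv : ∀ t ∈ J, HasDerivWithinAt (hamiltonian g ζ x y) 0 J t := fun t ht =>
    ((hJS t ht).hasDerivAt_hamiltonian_zero (hζ t ht) (hx t ht) (hy t ht)).hasDerivWithinAt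
  exact fun s hs t ht => eq_of_forall_hasDerivWithinAt_zero hJ.convex hderiv hs ht

/-- For a C² solution of the steady John–Sclavounos equations on an
interval `J`, the Hamiltonian
`H(t) = g ζ + ½(ẋ² + ẏ²) + ½(ẋ ζ_x + ẏ ζ_y)²` is constant on `J`. -/
theorem steadyJS_hamiltonian_conserved
    (g : ℝ) (hg : 0 < g) (ζ : ℝ × ℝ → ℝ) (hζ : ContDiff ℝ 2 ζ)
    (x y : ℝ → ℝ) (hx : ContDiff ℝ 2 x) (hy : ContDiff ℝ 2 y)
    (J : Set ℝ) (hJ : J.OrdConnected)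
    (hJS : ∀ t ∈ J, SteadyJSEq g ζ x y t)
    (H : ℝ → ℝ)
    (hH : ∀ t, H t = g * ζ (x t, y t) + (1 / 2) * ((deriv x t) ^ 2 + (deriv y t) ^ 2)
      + (1 / 2) * (deriv x t * dx ζ (x t, y t) + deriv y t * dy ζ (x t, y t)) ^ 2) :
    ∀ s ∈ J, ∀ t ∈ J, H s = H t := by
  rw [show H = hamiltonian g ζ x y from funext hH]
  exact steadyJS_hamiltonian_conserved_general hJ (fun _ _ => hζ.contDiffAt)
    (fun _ _ => hx.contDiffAt) (fun _ _ => hy.contDiffAt) hJS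

end
end

section
/- (Vorticity created on an unsteady free surface.) Let ζ: ℝ² × ℝ → ℝ be C², let (x(t), y(t)) be a C¹ horizontal trajectory with velocity (ẋ, ẏ), define h = 1 + ζ_x² + ζ_y² and the unit outward normal n(t) = (−ζ_x, −ζ_y, 1)/√h, with all partial derivatives of ζ evaluated at (x(t), y(t), t). Then the tangential vorticity vector ω_∥ := 2 n × (dn/dt) equals (2/h)(G_y, −G_x, ζ_x G_y − ζ_y G_x), where G_x = ζ_xt + ẋ ζ_xx + ẏ ζ_xy and G_y = ζ_yt + ẋ ζ_xy + ẏ ζ_yy. -/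
noncomputable section

/-!
Since `m × m = 0`, rescaling a moving vector `m` by a scalar function `c` only multiplies `m × m'`
by `c²`. The factor `1/√h` in the unit normal therefore never has to be differentiated, and it
remains to differentiate the slopes `ζ_x` and `ζ_y` along the trajectory.
-/

open Topology

section

variable {𝕜 E F : Type*} [NontriviallyNormedField 𝕜] [NormedAddCommGroup E] [NormedSpace 𝕜 E]

theorem apply_smul_deriv_smul_of_isAlt [AddCommGroup F] [Module 𝕜 F] {B : E →ₗ[𝕜] E →ₗ[𝕜] F}
    (hB : B.IsAlt) {c : 𝕜 → 𝕜} {m : 𝕜 → E} {m' : E} {t : 𝕜} (hc : DifferentiableAt 𝕜 c t)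
    (hm : HasDerivAt m m' t) :
    B (c t • m t) (deriv (fun s => c s • m s) t) = c t ^ 2 • B (m t) m' := by
  rw [(hc.hasDerivAt.fun_smul hm).deriv]
  simp only [map_add, map_smul, LinearMap.smul_apply, hB.self_eq_zero, smul_zero, add_zero,
    smul_smul, pow_two]

variable [NormedAddCommGroup F] [NormedSpace 𝕜 F]

theorem fderiv_fderiv_apply_const {f : E → F} {p : E}
    (hf : DifferentiableAt 𝕜 (fderiv 𝕜 f) p) (v w : E) :
    fderiv 𝕜 (fun q => fderiv 𝕜 f q v) p w = fderiv 𝕜 (fderiv 𝕜 f) p w v := by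
  simp [fderiv_clm_apply hf (differentiableAt_const v)]

theorem fderiv_fderiv_apply_const_comm [IsRCLikeNormedField 𝕜] {f : E → F} {p : E}
    (hf : ∀ᶠ q in 𝓝 p, DifferentiableAt 𝕜 f q) (hf' : DifferentiableAt 𝕜 (fderiv 𝕜 f) p)
    (v w : E) :
    fderiv 𝕜 (fun q => fderiv 𝕜 f q v) p w = fderiv 𝕜 (fun q => fderiv 𝕜 f q w) p v := by
  rw [fderiv_fderiv_apply_const hf', fderiv_fderiv_apply_const hf']
  exact second_derivative_symmetric_of_eventually (hf.mono fun _ hq => hq.hasFDerivAt)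
    hf'.hasFDerivAt w v

theorem hasDerivAt_along_trajectory {f : 𝕜 × 𝕜 × 𝕜 → F} {x y : 𝕜 → 𝕜} {x' y' t : 𝕜}
    (hf : DifferentiableAt 𝕜 f (x t, y t, t)) (hx : HasDerivAt x x' t) (hy : HasDerivAt y y' t) :
    HasDerivAt (fun s => f (x s, y s, s))
      (fderiv 𝕜 f (x t, y t, t) (0, 0, 1) + x' • fderiv 𝕜 f (x t, y t, t) (1, 0, 0)
        + y' • fderiv 𝕜 f (x t, y t, t) (0, 1, 0)) t := by
  have hpath : HasDerivAt (fun s => (x s, y s, s)) (x', y', (1 : 𝕜)) t :=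
    hx.prodMk (hy.prodMk (hasDerivAt_id t))
  have hvelocity : (x', y', (1 : 𝕜)) = (0, 0, 1) + x' • (1, 0, 0) + y' • (0, 1, 0) := by simp
  simpa only [hvelocity, map_add, map_smul, Function.comp_def] using
    hf.hasFDerivAt.comp_hasDerivAt t hpath

end

/-- The upward unit normal of a graph `z = ζ(x, y)` at a point where its slopes are `ζ_x = p` and
`ζ_y = q`, so that the kinematics of the normal depend on two real functions only. -/
def graphUnitNormal (p q : ℝ) : Fin 3 → ℝ := (√(1 + p ^ 2 + q ^ 2))⁻¹ • ![-p, -q, 1]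

theorem crossProduct_deriv_graphUnitNormal {p q : ℝ → ℝ} {p' q' t : ℝ}
    (hp : HasDerivAt p p' t) (hq : HasDerivAt q q' t) :
    crossProduct (graphUnitNormal (p t) (q t)) (deriv (fun s => graphUnitNormal (p s) (q s)) t) =
      (1 + p t ^ 2 + q t ^ 2)⁻¹ • ![q', -p', p t * q' - q t * p'] := by
  have hpos : 0 < 1 + p t ^ 2 + q t ^ 2 := by positivity
  have hscale : DifferentiableAt ℝ (fun s => (√(1 + p s ^ 2 + q s ^ 2))⁻¹) t :=
    ((((hp.differentiableAt.fun_pow 2).const_add 1).fun_add (hq.differentiableAt.fun_pow 2)).sqrt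
      hpos.ne').fun_inv (Real.sqrt_pos.2 hpos).ne'
  have hdirection : HasDerivAt (fun s => ![-p s, -q s, 1]) ![-p', -q', 0] t :=
    hp.fun_neg.finCons (hq.fun_neg.finCons ((hasDerivAt_const t 1).finCons
      (hasDerivAt_pi.2 finZeroElim)))
  have hcross : crossProduct ![-p t, -q t, 1] ![-p', -q', 0] =
      ![q', -p', p t * q' - q t * p'] := by
    simp [cross_apply]
  have hcross_alt : (crossProduct (R := ℝ)).IsAlt := cross_self
  unfold graphUnitNormal
  rw [apply_smul_deriv_smul_of_isAlt hcross_alt hscale hdirection, hcross, inv_pow,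
    Real.sq_sqrt hpos.le]

theorem surface_vorticity_formula_general {ζ : ℝ × ℝ × ℝ → ℝ} {x y : ℝ → ℝ} {x' y' t : ℝ}
    (hζ : ∀ᶠ p in 𝓝 (x t, y t, t), DifferentiableAt ℝ ζ p)
    (hζ' : DifferentiableAt ℝ (fderiv ℝ ζ) (x t, y t, t))
    (hx : HasDerivAt x x' t) (hy : HasDerivAt y y' t) {h : ℝ → ℝ}
    (hh : ∀ s, h s = 1 + dX ζ (x s, y s, s) ^ 2 + dY ζ (x s, y s, s) ^ 2)
    {n : ℝ → Fin 3 → ℝ}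
    (hn : ∀ s, n s = (√(h s))⁻¹ • ![-(dX ζ (x s, y s, s)), -(dY ζ (x s, y s, s)), 1])
    {Gx Gy : ℝ}
    (hGx : Gx = dXT ζ (x t, y t, t) + x' * dXX ζ (x t, y t, t) + y' * dXY ζ (x t, y t, t))
    (hGy : Gy = dYT ζ (x t, y t, t) + x' * dXY ζ (x t, y t, t) + y' * dYY ζ (x t, y t, t)) :
    (2 : ℝ) • crossProduct (n t) (deriv n t) =
      (2 / h t) • ![Gy, -Gx, dX ζ (x t, y t, t) * Gy - dY ζ (x t, y t, t) * Gx] := by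
  have hdX : HasDerivAt (fun s => dX ζ (x s, y s, s)) Gx t :=
    hGx ▸ hasDerivAt_along_trajectory (hζ'.clm_apply (differentiableAt_const _)) hx hy
  have hmixed : dXY ζ (x t, y t, t) = fderiv ℝ (dY ζ) (x t, y t, t) (1, 0, 0) :=
    fderiv_fderiv_apply_const_comm hζ hζ' _ _
  have hdY : HasDerivAt (fun s => dY ζ (x s, y s, s)) Gy t := by
    rw [hGy, hmixed]
    exact hasDerivAt_along_trajectory (hζ'.clm_apply (differentiableAt_const _)) hx hy
  have hnormal : n = fun s => graphUnitNormal (dX ζ (x s, y s, s)) (dY ζ (x s, y s, s)) :=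
    funext fun s => by rw [hn, hh, graphUnitNormal]
  rw [hnormal, crossProduct_deriv_graphUnitNormal hdX hdY, ← hh, smul_smul, div_eq_mul_inv]

/-- (Vorticity created on an unsteady free surface.) Along a C¹
horizontal trajectory `(x(t), y(t))` on the C² surface `z = ζ(x,y,t)`, with
`h = 1 + ζ_x² + ζ_y²` and outward unit normal `n = (−ζ_x, −ζ_y, 1)/√h`, the tangential
vorticity `ω_∥ = 2 n × (dn/dt)` equals `(2/h)(G_y, −G_x, ζ_x G_y − ζ_y G_x)`, where
`G_x = ζ_xt + ẋ ζ_xx + ẏ ζ_xy` and `G_y = ζ_yt + ẋ ζ_xy + ẏ ζ_yy`. -/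
theorem surface_vorticity_formula
    (ζ : ℝ × ℝ × ℝ → ℝ) (hζ : ContDiff ℝ 2 ζ)
    (x y : ℝ → ℝ) (hx : ContDiff ℝ 1 x) (hy : ContDiff ℝ 1 y)
    (h : ℝ → ℝ)
    (hh : ∀ t, h t = 1 + dX ζ (x t, y t, t) ^ 2 + dY ζ (x t, y t, t) ^ 2)
    (n : ℝ → Fin 3 → ℝ)
    (hn : ∀ t, n t = (Real.sqrt (h t))⁻¹ •
      ![-(dX ζ (x t, y t, t)), -(dY ζ (x t, y t, t)), 1])
    (Gx Gy : ℝ → ℝ)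
    (hGx : ∀ t, Gx t = dXT ζ (x t, y t, t) + deriv x t * dXX ζ (x t, y t, t)
      + deriv y t * dXY ζ (x t, y t, t))
    (hGy : ∀ t, Gy t = dYT ζ (x t, y t, t) + deriv x t * dXY ζ (x t, y t, t)
      + deriv y t * dYY ζ (x t, y t, t)) :
    ∀ t, (2 : ℝ) • crossProduct (n t) (deriv n t) =
      (2 / h t) • ![Gy t, -(Gx t),
        dX ζ (x t, y t, t) * Gy t - dY ζ (x t, y t, t) * Gx t] := fun t =>
  surface_vorticity_formula_general (.of_forall (hζ.differentiable two_ne_zero))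
    ((hζ.fderiv_right (m := 1) le_rfl).differentiable one_ne_zero _)
    (hx.differentiable one_ne_zero t).hasDerivAt (hy.differentiable one_ne_zero t).hasDerivAt
    hh hn (hGx t) (hGy t)

end
end

section
/- (Poisson bracket of the Dirac constraints.) On ℝ⁸ with coordinates (x, y, z, t, u_x, u_y, u_z, E), consider the canonical Poisson bracket {F, G} = F_x G_{u_x} + F_y G_{u_y} + F_z G_{u_z} + F_t G_E − F_{u_x} G_x − F_{u_y} G_y − F_{u_z} G_z − F_E G_t. Let ζ: ℝ² × ℝ → ℝ be C¹ and define the constraints Φ₁ = z − ζ(x, y, t) and Φ₂ = u_z − u_x ζ_x(x,y,t) − u_y ζ_y(x,y,t) − ζ_t(x,y,t). Then {Φ₁, Φ₂} = 1 + ζ_x² + ζ_y², which is everywhere nonzero; hence the 2×2 constraint matrix C with C₁₁ = C₂₂ = 0 and C₁₂ = −C₂₁ = {Φ₁, Φ₂} is invertible. -/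
noncomputable section

open Matrix

/-- Partial derivative of an observable `F` on the extended phase space `ℝ⁸`
(coordinates `(x, y, z, t, u_x, u_y, u_z, E)` indexed by `0,…,7`) with respect to the
`i`-th coordinate. -/
def pd (F : (Fin 8 → ℝ) → ℝ) (i : Fin 8) (w : Fin 8 → ℝ) : ℝ :=
  deriv (fun s => F (Function.update w i s)) (w i)

/-- The canonical Poisson bracket on `ℝ⁸` with conjugate pairs
`(x,u_x), (y,u_y), (z,u_z), (t,E)`:
`{F,G} = F_x G_{u_x} + F_y G_{u_y} + F_z G_{u_z} + F_t G_E
        − F_{u_x} G_x − F_{u_y} G_y − F_{u_z} G_z − F_E G_t`. -/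
def pbracket (F G : (Fin 8 → ℝ) → ℝ) (w : Fin 8 → ℝ) : ℝ :=
  pd F 0 w * pd G 4 w + pd F 1 w * pd G 5 w + pd F 2 w * pd G 6 w + pd F 3 w * pd G 7 w
    - pd F 4 w * pd G 0 w - pd F 5 w * pd G 1 w - pd F 6 w * pd G 2 w
    - pd F 7 w * pd G 3 w

/-!
The position constraint does not involve the velocities or the energy, so half of its bracket with
any observable vanishes. In the bracket with the velocity constraint this removes exactly the terms
containing second derivatives of `ζ`, which need not exist. What survives is the pairing of
`(-ζ_x, -ζ_y, 1, -ζ_t)`, the gradient of `Φ₁` in the positions and time, with `(-ζ_x, -ζ_y, 1, 0)`,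
the gradient of `Φ₂` in the velocities and energy.
-/

section PartialDerivatives

variable {ζ : ℝ × ℝ × ℝ → ℝ} {x y t : ℝ}

lemma hasDerivAt_dX (h : DifferentiableAt ℝ ζ (x, y, t)) :
    HasDerivAt (fun s => ζ (s, y, t)) (dX ζ (x, y, t)) x :=
  h.hasFDerivAt.comp_hasDerivAt x
    ((hasDerivAt_id x).prodMk ((hasDerivAt_const x y).prodMk (hasDerivAt_const x t)))

lemma hasDerivAt_dY (h : DifferentiableAt ℝ ζ (x, y, t)) :
    HasDerivAt (fun s => ζ (x, s, t)) (dY ζ (x, y, t)) y :=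
  h.hasFDerivAt.comp_hasDerivAt y
    ((hasDerivAt_const y x).prodMk ((hasDerivAt_id y).prodMk (hasDerivAt_const y t)))

end PartialDerivatives

section Bracket

variable {F : (Fin 8 → ℝ) → ℝ}

lemma pd_eq_zero_of_dependsOn {S : Set (Fin 8)} {i : Fin 8} (hF : DependsOn F S) (hi : i ∉ S)
    (w : Fin 8 → ℝ) : pd F i w = 0 := by
  have hconst (s : ℝ) : F (Function.update w i s) = F w :=
    hF fun _ hj => Function.update_of_ne (ne_of_mem_of_not_mem hj hi) s w
  simp only [pd, hconst, deriv_const]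

lemma pbracket_eq_of_dependsOn_spacetime (hF : DependsOn F {0, 1, 2, 3})
    (G : (Fin 8 → ℝ) → ℝ) (w : Fin 8 → ℝ) :
    pbracket F G w =
      pd F 0 w * pd G 4 w + pd F 1 w * pd G 5 w + pd F 2 w * pd G 6 w + pd F 3 w * pd G 7 w := by
  have h₄ : pd F 4 w = 0 := pd_eq_zero_of_dependsOn hF (by simp) w
  have h₅ : pd F 5 w = 0 := pd_eq_zero_of_dependsOn hF (by simp) w
  have h₆ : pd F 6 w = 0 := pd_eq_zero_of_dependsOn hF (by simp) w
  have h₇ : pd F 7 w = 0 := pd_eq_zero_of_dependsOn hF (by simp) w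
  simp only [pbracket, h₄, h₅, h₆, h₇, zero_mul, sub_zero]

end Bracket

/-- The constraint `Φ₁ = z − ζ(x,y,t)`, vanishing when the particle lies on the surface. -/
def positionConstraint (ζ : ℝ × ℝ × ℝ → ℝ) (w : Fin 8 → ℝ) : ℝ :=
  w 2 - ζ (w 0, w 1, w 3)

/-- The constraint `Φ₂ = u_z − u_x ζ_x − u_y ζ_y − ζ_t`, vanishing when the vertical velocity of
the particle matches the motion of the surface. -/
def velocityConstraint (ζ : ℝ × ℝ × ℝ → ℝ) (w : Fin 8 → ℝ) : ℝ :=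
  w 6 - w 4 * dX ζ (w 0, w 1, w 3) - w 5 * dY ζ (w 0, w 1, w 3) - dT ζ (w 0, w 1, w 3)

section Constraints

variable (ζ : ℝ × ℝ × ℝ → ℝ) (w : Fin 8 → ℝ)

lemma dependsOn_positionConstraint : DependsOn (positionConstraint ζ) {0, 1, 2, 3} := by
  intro v w h
  simp only [positionConstraint, h 0 (by simp), h 1 (by simp), h 2 (by simp), h 3 (by simp)]

lemma pd_positionConstraint_z : pd (positionConstraint ζ) 2 w = 1 := by
  simp [pd, positionConstraint]

lemma pd_velocityConstraint_ux :
    pd (velocityConstraint ζ) 4 w = -dX ζ (w 0, w 1, w 3) := by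
  simp [pd, velocityConstraint]

lemma pd_velocityConstraint_uy :
    pd (velocityConstraint ζ) 5 w = -dY ζ (w 0, w 1, w 3) := by
  simp [pd, velocityConstraint]

lemma pd_velocityConstraint_uz : pd (velocityConstraint ζ) 6 w = 1 := by
  simp [pd, velocityConstraint]

lemma pd_velocityConstraint_energy : pd (velocityConstraint ζ) 7 w = 0 := by
  simp [pd, velocityConstraint]

variable {ζ w}

lemma pd_positionConstraint_x (h : DifferentiableAt ℝ ζ (w 0, w 1, w 3)) :
    pd (positionConstraint ζ) 0 w = -dX ζ (w 0, w 1, w 3) := by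
  simpa [pd, positionConstraint] using (hasDerivAt_dX h).deriv

lemma pd_positionConstraint_y (h : DifferentiableAt ℝ ζ (w 0, w 1, w 3)) :
    pd (positionConstraint ζ) 1 w = -dY ζ (w 0, w 1, w 3) := by
  simpa [pd, positionConstraint] using (hasDerivAt_dY h).deriv

lemma pbracket_positionConstraint_velocityConstraint
    (h : DifferentiableAt ℝ ζ (w 0, w 1, w 3)) :
    pbracket (positionConstraint ζ) (velocityConstraint ζ) w =
      1 + dX ζ (w 0, w 1, w 3) ^ 2 + dY ζ (w 0, w 1, w 3) ^ 2 := by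
  rw [pbracket_eq_of_dependsOn_spacetime (dependsOn_positionConstraint ζ),
    pd_positionConstraint_x h, pd_positionConstraint_y h, pd_positionConstraint_z,
    pd_velocityConstraint_ux, pd_velocityConstraint_uy, pd_velocityConstraint_uz,
    pd_velocityConstraint_energy]
  ring

end Constraints

lemma isUnit_det_skew_fin_two_iff {R : Type*} [CommRing R] {a : R} :
    IsUnit (!![0, a; -a, 0] : Matrix (Fin 2) (Fin 2) R).det ↔ IsUnit a := by
  have hdet : (!![0, a; -a, 0] : Matrix (Fin 2) (Fin 2) R).det = a * a := by
    rw [det_fin_two_of]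
    ring
  rw [hdet, IsUnit.mul_iff, and_self_iff]

theorem dirac_constraints_bracket_general {ζ : ℝ × ℝ × ℝ → ℝ} {w : Fin 8 → ℝ}
    (hζ : DifferentiableAt ℝ ζ (w 0, w 1, w 3)) :
    let c := pbracket (positionConstraint ζ) (velocityConstraint ζ) w
    c = 1 + dX ζ (w 0, w 1, w 3) ^ 2 + dY ζ (w 0, w 1, w 3) ^ 2 ∧
      c ≠ 0 ∧ IsUnit (!![0, c; -c, 0] : Matrix (Fin 2) (Fin 2) ℝ).det := by
  intro c
  have hc : c = 1 + dX ζ (w 0, w 1, w 3) ^ 2 + dY ζ (w 0, w 1, w 3) ^ 2 :=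
    pbracket_positionConstraint_velocityConstraint hζ
  have hc_ne : c ≠ 0 := by
    rw [hc]
    positivity
  exact ⟨hc, hc_ne, isUnit_det_skew_fin_two_iff.mpr hc_ne.isUnit⟩

/-- (Poisson bracket of the Dirac constraints.) For the constraints
`Φ₁ = z − ζ(x,y,t)` and `Φ₂ = u_z − u_x ζ_x − u_y ζ_y − ζ_t` on the extended phase
space `ℝ⁸`, one has `{Φ₁, Φ₂} = 1 + ζ_x² + ζ_y² ≠ 0`; hence the constraint matrix
`C = [[0, {Φ₁,Φ₂}],[−{Φ₁,Φ₂}, 0]]` is invertible. -/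
theorem dirac_constraints_bracket
    (ζ : ℝ × ℝ × ℝ → ℝ) (hζ : ContDiff ℝ 1 ζ)
    (Φ₁ Φ₂ : (Fin 8 → ℝ) → ℝ)
    (hΦ₁ : Φ₁ = fun w => w 2 - ζ (w 0, w 1, w 3))
    (hΦ₂ : Φ₂ = fun w => w 6 - w 4 * dX ζ (w 0, w 1, w 3)
      - w 5 * dY ζ (w 0, w 1, w 3) - dT ζ (w 0, w 1, w 3)) :
    ∀ w : Fin 8 → ℝ,
      pbracket Φ₁ Φ₂ w = 1 + dX ζ (w 0, w 1, w 3) ^ 2 + dY ζ (w 0, w 1, w 3) ^ 2 ∧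
      pbracket Φ₁ Φ₂ w ≠ 0 ∧
      IsUnit (!![0, pbracket Φ₁ Φ₂ w; -(pbracket Φ₁ Φ₂ w), 0] :
        Matrix (Fin 2) (Fin 2) ℝ).det := by
  subst hΦ₁ hΦ₂
  exact fun w => dirac_constraints_bracket_general (hζ.differentiable one_ne_zero _)

end
end
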